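/- For any diagonal matrix M_n = diag(b_0,…,b_{n−1}) on the auxiliary space, the transfer matrices commute: [t^(n)(u), t^(n)(v)] = 0 in End(H), where t^(n)(u) := Tr_{V_a}(M_n T_a(u)). -/

import Mathlib

noncomputable section
open scoped BigOperators

variable {F : Type*}

/-- `x ⊖ y := (x - y)/(1 + β·y)`. -/
def om [Field F] (β x y : F) : F := (x - y) / (1 + β * y)

/-- `⊖ t := -t/(1 + β·t)`. -/
def negOm [Field F] (β t : F) : F := (-t) / (1 + β * t)

/-- The R-matrix `R^{(n)}(x,y)` on `V ⊗ V`, `V = F^n`, with entries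
`R_{ij,kl} = (1 + [k<l]·β(x⊖y)) δ_{il} δ_{jk} + [k>l]·(x⊖y) δ_{ik} δ_{jl}`;
the row index is the pair `(i,j)`, the column index is the pair `(k,l)`. -/
def Rmat [Field F] (n : ℕ) (β x y : F) :
    Matrix (Fin n × Fin n) (Fin n × Fin n) F := Matrix.of fun p q =>
  (if p.1 = q.2 ∧ p.2 = q.1 then (if q.1 < q.2 then 1 + β * om β x y else 1) else 0) +
  (if p.1 = q.1 ∧ p.2 = q.2 ∧ q.2 < q.1 then om β x y else 0)

/-- `R_{a i}(u, τ)` : the R-matrix acting on the auxiliary space (first factor)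
and the `i`-th site of `H = (F^n)^{⊗N}`, identity elsewhere. -/
def Rsite [Field F] (n N : ℕ) (β u τ : F) (i : Fin N) :
    Matrix (Fin n × (Fin N → Fin n)) (Fin n × (Fin N → Fin n)) F := Matrix.of fun p q =>
  Rmat n β u τ (p.1, p.2 i) (q.1, q.2 i) *
    (if ∀ j, j ≠ i → p.2 j = q.2 j then 1 else 0)

/-- The monodromy matrix `T_a(u) = R_{aN}(u,t_N) ⋯ R_{a1}(u,t_1)` on `V_a ⊗ H`. -/
def Tmono [Field F] (n N : ℕ) (β u : F) (t : Fin N → F) :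
    Matrix (Fin n × (Fin N → Fin n)) (Fin n × (Fin N → Fin n)) F :=
  ((List.ofFn fun i : Fin N => Rsite n N β u (t i) i).reverse).prod

/-- The block `T_a(u)_{r c}` (with respect to the auxiliary space) as an operator on `H`. -/
def blockOp [Field F] (n N : ℕ) (β u : F) (t : Fin N → F) (r c : Fin n) :
    Matrix (Fin N → Fin n) (Fin N → Fin n) F :=
  Matrix.of fun s s' => Tmono n N β u t (r, s) (c, s')

/-- The natural basis vector `|n_1,…,n_N⟩` of `H` (also used as a dual basis covector). -/
def ket [Field F] (n N : ℕ) (g : Fin N → Fin n) : (Fin N → Fin n) → F :=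
  fun s => if s = g then 1 else 0

/-- The transfer matrix `t^{(n)}(u) = Tr_{V_a}(M_n T_a(u))` with `M_n = diag(b_0,…,b_{n-1})`. -/
def transferM [Field F] (n N : ℕ) (β u : F) (t : Fin N → F) (b : Fin n → F) :
    Matrix (Fin N → Fin n) (Fin N → Fin n) F :=
  Matrix.of fun s s' => ∑ a : Fin n, b a * Tmono n N β u t (a, s) (a, s')

/-!
Composing `R(x, y)` with the flip of `V ⊗ V` gives `Ř(x, y) = 1 + (x ⊖ y) U`, where `U` satisfies
the `0`-Hecke relations `U² = β U` and `U₁₂ U₂₃ U₁₂ = U₂₃ U₁₂ U₂₃`. Together with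
`u ⊖ w = (u ⊖ v) + (v ⊖ w) + β (u ⊖ v)(v ⊖ w)` these give the braid form of the Yang–Baxter
equation and the invertibility of `Ř`. With one leg read as the quantum space, Yang–Baxter says that
`Ř(u, v)` intertwines `L(u) ⊗ L(v)` with `L(v) ⊗ L(u)` at each site. Operators at distinct sites
commute, so `Ř(u, v)` also intertwines `T(u) ⊗ T(v)` with `T(v) ⊗ T(u)`. Since `Ř` commutes with
`M ⊗ M`, the twisted traces of these two matrices agree; they are `t(u) t(v)` and `t(v) t(u)`.
-/

open Matrix
open scoped Kronecker

section Baxterization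

variable {R A : Type*} [CommRing R] [Ring A] [Algebra R A] {β : R}

theorem one_add_smul_mul_one_add_smul {U : A} (hU : U * U = β • U) (q r : R) :
    (1 + q • U) * (1 + r • U) = 1 + (q + r + β * q * r) • U := by
  simp only [add_mul, mul_add, one_mul, mul_one, smul_mul_assoc, mul_smul_comm, smul_smul, hU]
  module

theorem isUnit_one_add_smul {U : A} (hU : U * U = β • U) {q r : R}
    (hqr : q + r + β * q * r = 0) : IsUnit (1 + q • U) := by
  have hrq : r + q + β * r * q = 0 := by linear_combination hqr
  refine ⟨⟨1 + q • U, 1 + r • U, ?_, ?_⟩, rfl⟩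
  · rw [one_add_smul_mul_one_add_smul hU, hqr, zero_smul, add_zero]
  · rw [one_add_smul_mul_one_add_smul hU, hrq, zero_smul, add_zero]

theorem yang_baxter_of_braid {U V : A} (hU : U * U = β • U) (hV : V * V = β • V)
    (hUV : U * V * U = V * U * V) (q r : R) :
    (1 + q • V) * (1 + (q + r + β * q * r) • U) * (1 + r • V) =
      (1 + r • U) * (1 + (q + r + β * q * r) • V) * (1 + q • U) := by
  simp only [add_mul, mul_add, one_mul, mul_one, smul_mul_assoc, mul_smul_comm, smul_smul, smul_add,
    hU, hV, hUV]
  module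

end Baxterization

section MatrixOverAlgebra

variable {l m n o A : Type*}

/-- Every entry of `X` commutes with every entry of `Y`; over a noncommutative ring this is the
condition under which such matrices can be exchanged in a Kronecker product. -/
def EntrywiseCommute [Mul A] (X : Matrix l m A) (Y : Matrix n o A) : Prop :=
  ∀ i j i' j', Commute (X i j) (Y i' j')

theorem EntrywiseCommute.list_prod_left [Semiring A] [Fintype m] [DecidableEq m]
    {Y : Matrix n o A} {L : List (Matrix m m A)} (h : ∀ X ∈ L, EntrywiseCommute X Y) :
    EntrywiseCommute L.prod Y := by
  induction L with
  | nil =>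
    intro i j i' j'
    rw [List.prod_nil, Matrix.one_apply]
    split_ifs
    exacts [Commute.one_left _, Commute.zero_left _]
  | cons X L ih =>
    rw [List.forall_mem_cons] at h
    intro i j i' j'
    rw [List.prod_cons, Matrix.mul_apply]
    exact Commute.sum_left _ _ _ fun k _ => (h.1 i k i' j').mul_left (ih h.2 k j i' j')

theorem mul_kronecker_mul_of_entrywiseCommute {l' m' n' : Type*} [Semiring A] [Fintype m]
    [Fintype m'] {X : Matrix l m A} {X' : Matrix m n A} {Y : Matrix l' m' A} {Y' : Matrix m' n' A}
    (h : EntrywiseCommute X' Y) :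
    (X * X') ⊗ₖ (Y * Y') = (X ⊗ₖ Y) * (X' ⊗ₖ Y') := by
  ext p q
  simp only [kroneckerMap_apply, Matrix.mul_apply, Fintype.sum_prod_type, Finset.sum_mul_sum]
  exact Finset.sum_congr rfl fun i _ => Finset.sum_congr rfl fun j _ =>
    (h i q.1 p.2 j).mul_mul_mul_comm _ _

theorem semiconjBy_kronecker_list_prod [Semiring A] [Fintype m] [DecidableEq m] {ι : Type*}
    {S : Matrix (m × m) (m × m) A} {X Y : ι → Matrix m m A}
    (hS : ∀ i, SemiconjBy S (X i ⊗ₖ Y i) (Y i ⊗ₖ X i))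
    (hXY : ∀ i j, i ≠ j → EntrywiseCommute (X i) (Y j)) {L : List ι} (hL : L.Nodup) :
    SemiconjBy S ((L.map X).prod ⊗ₖ (L.map Y).prod) ((L.map Y).prod ⊗ₖ (L.map X).prod) := by
  induction L with
  | nil => simp
  | cons i L ih =>
    obtain ⟨hi, hL⟩ := List.nodup_cons.1 hL
    have hX : EntrywiseCommute (L.map X).prod (Y i) := .list_prod_left <| List.forall_mem_map.2
      fun j hj => hXY j i (ne_of_mem_of_not_mem hj hi)
    have hY : EntrywiseCommute (L.map Y).prod (X i) := .list_prod_left <| List.forall_mem_map.2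
      fun j hj _ _ _ _ => (hXY i j (ne_of_mem_of_not_mem hj hi).symm _ _ _ _).symm
    simp only [List.map_cons, List.prod_cons]
    rw [mul_kronecker_mul_of_entrywiseCommute hX, mul_kronecker_mul_of_entrywiseCommute hY]
    exact (hS i).mul_right (ih hL)

variable {R : Type*} [CommSemiring R] [Semiring A] [Algebra R A] [Fintype m] [DecidableEq m]

theorem algebraMap_mapMatrix_mul_apply (Q : Matrix m m R) (X : Matrix m m A) (i j : m) :
    ((algebraMap R A).mapMatrix Q * X) i j = ∑ k, Q i k • X k j := by
  simp [Matrix.mul_apply, Algebra.smul_def]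

theorem mul_algebraMap_mapMatrix_apply (Q : Matrix m m R) (X : Matrix m m A) (i j : m) :
    (X * (algebraMap R A).mapMatrix Q) i j = ∑ k, Q k j • X i k := by
  simp [Matrix.mul_apply, Algebra.smul_def, Algebra.commutes]

theorem trace_algebraMap_mapMatrix_mul_comm (Q : Matrix m m R) (X : Matrix m m A) :
    trace ((algebraMap R A).mapMatrix Q * X) = trace (X * (algebraMap R A).mapMatrix Q) := by
  simp only [trace, diag, algebraMap_mapMatrix_mul_apply, mul_algebraMap_mapMatrix_apply]
  exact Finset.sum_comm

theorem trace_eq_of_semiconjBy_algebraMap {Q : Matrix m m R} (hQ : IsUnit Q) {X Y : Matrix m m A}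
    (h : SemiconjBy ((algebraMap R A).mapMatrix Q) X Y) : trace X = trace Y := by
  obtain ⟨P, hQP, hPQ⟩ := isUnit_iff_exists.1 hQ
  have hQP' : (algebraMap R A).mapMatrix Q * (algebraMap R A).mapMatrix P = 1 := by
    rw [← map_mul, hQP, map_one]
  have hPQ' : (algebraMap R A).mapMatrix P * (algebraMap R A).mapMatrix Q = 1 := by
    rw [← map_mul, hPQ, map_one]
  calc
    trace X = trace ((algebraMap R A).mapMatrix P * ((algebraMap R A).mapMatrix Q * X)) := by
      rw [← mul_assoc, hPQ', one_mul]
    _ = trace (Y * (algebraMap R A).mapMatrix Q * (algebraMap R A).mapMatrix P) := by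
      rw [h.eq, trace_algebraMap_mapMatrix_mul_comm]
    _ = trace Y := by rw [mul_assoc, hQP', mul_one]

theorem commute_trace_mul_of_semiconjBy_kronecker {Q : Matrix (m × m) (m × m) R} (hQ : IsUnit Q)
    {D : Matrix m m R} (hD : Commute Q (D ⊗ₖ D)) {X Y : Matrix m m A}
    (h : SemiconjBy ((algebraMap R A).mapMatrix Q) (X ⊗ₖ Y) (Y ⊗ₖ X)) :
    Commute (trace ((algebraMap R A).mapMatrix D * X))
      (trace ((algebraMap R A).mapMatrix D * Y)) := by
  have hscalar (Z : Matrix m m A) : EntrywiseCommute Z ((algebraMap R A).mapMatrix D) :=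
    fun _ _ _ _ => (Algebra.commutes _ _).symm
  have hDD : (algebraMap R A).mapMatrix (D ⊗ₖ D) =
      (algebraMap R A).mapMatrix D ⊗ₖ (algebraMap R A).mapMatrix D := by
    ext; simp
  have hQDD := hD.map (algebraMap R A).mapMatrix
  rw [hDD] at hQDD
  rw [Commute, SemiconjBy, ← trace_kronecker, ← trace_kronecker,
    mul_kronecker_mul_of_entrywiseCommute (hscalar X),
    mul_kronecker_mul_of_entrywiseCommute (hscalar Y)]
  exact trace_eq_of_semiconjBy_algebraMap hQ (SemiconjBy.mul_right hQDD h)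

end MatrixOverAlgebra

section Ampliation

variable {R k m o : Type*} [CommSemiring R] [Fintype k] [DecidableEq k] [Fintype m] [DecidableEq m]
  [Fintype o] [DecidableEq o]

/-- The operator `M ⊗ 1` on the tensor product of spaces with bases `m` and `o`, as an operator on a
space whose basis `k` is identified with `m × o` by `e`. All the embeddings of an operator into a
tensor product used here (two legs out of three, one site of a chain) are of this form. -/
def ampliation (e : k ≃ m × o) : Matrix m m R →ₐ[R] Matrix k k R :=
  (reindexAlgEquiv R R e.symm).toAlgHom.comp
    { (blockDiagonalRingHom m o R).comp (Pi.constRingHom o (Matrix m m R)) with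
      commutes' := fun r => by
        ext p q
        simp [algebraMap_matrix_apply, blockDiagonal_apply, Prod.ext_iff, ← ite_and, and_comm] }

theorem ampliation_apply (e : k ≃ m × o) (M : Matrix m m R) (i j : k) :
    ampliation e M i j = if (e i).2 = (e j).2 then M (e i).1 (e j).1 else 0 := rfl

theorem vecMul_ampliation (e : k ≃ m × o) (M : Matrix m m R) (f : k → R) (j : k) :
    (f ᵥ* ampliation e M) j = ((fun x => f (e.symm (x, (e j).2))) ᵥ* M) (e j).1 := by
  simp only [vecMul, dotProduct, ampliation_apply]
  rw [← e.symm.sum_comp, Fintype.sum_prod_type]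
  simp

end Ampliation

section Site

variable {R m ι : Type*} [CommSemiring R] [Fintype m] [DecidableEq m] [Fintype ι] [DecidableEq ι]

/-- The action of a one-site operator at site `i` of the chain `⨂ ι`, whose basis vectors are the
configurations `ι → m`. -/
def siteHom (i : ι) : Matrix m m R →ₐ[R] Matrix (ι → m) (ι → m) R :=
  ampliation (Equiv.funSplitAt i m)

theorem siteHom_apply (i : ι) (M : Matrix m m R) (s s' : ι → m) :
    siteHom i M s s' = M (s i) (s' i) * if ∀ j, j ≠ i → s j = s' j then 1 else 0 := by
  simp [siteHom, ampliation_apply, funext_iff]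

theorem vecMul_siteHom (i : ι) (M : Matrix m m R) (f : (ι → m) → R) (s : ι → m) :
    (f ᵥ* siteHom i M) s = ∑ x, f (Function.update s i x) * M x (s i) := by
  have hupdate (x : m) : (Equiv.funSplitAt i m).symm (x, (Equiv.funSplitAt i m s).2) =
      Function.update s i x := by
    ext j
    by_cases hj : j = i <;> simp [hj]
  simp only [siteHom, vecMul_ampliation, hupdate]
  rfl

theorem commute_siteHom {i j : ι} (hij : i ≠ j) (M M' : Matrix m m R) :
    Commute (siteHom i M) (siteHom j M') := by
  refine ext_iff_vecMul.2 fun f => funext fun s => ?_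
  simp only [← vecMul_vecMul, vecMul_siteHom, Finset.sum_mul, Function.update_of_ne hij,
    Function.update_of_ne hij.symm]
  rw [Finset.sum_comm]
  refine Finset.sum_congr rfl fun x _ => Finset.sum_congr rfl fun y _ => ?_
  rw [Function.update_comm hij, mul_right_comm]

end Site

section Lax

variable {R m : Type*} [CommSemiring R] [Fintype m] [DecidableEq m]

/-- The action of a two-leg operator on legs 1 and 2 of `V ⊗ V ⊗ V`. -/
def leg₁₂ : Matrix (m × m) (m × m) R →ₐ[R] Matrix (m × m × m) (m × m × m) R :=
  ampliation (Equiv.prodAssoc m m m).symm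

/-- The action of a two-leg operator on legs 2 and 3 of `V ⊗ V ⊗ V`. -/
def leg₂₃ : Matrix (m × m) (m × m) R →ₐ[R] Matrix (m × m × m) (m × m × m) R :=
  ampliation (Equiv.prodComm m (m × m))

theorem leg₁₂_apply (M : Matrix (m × m) (m × m) R) (p q : m × m × m) :
    leg₁₂ M p q = if p.2.2 = q.2.2 then M (p.1, p.2.1) (q.1, q.2.1) else 0 := rfl

theorem leg₂₃_apply (M : Matrix (m × m) (m × m) R) (p q : m × m × m) :
    leg₂₃ M p q = if p.1 = q.1 then M p.2 q.2 else 0 := rfl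

theorem leg₂₃_mul_apply (K : Matrix (m × m) (m × m) R) (M : Matrix (m × m × m) (m × m × m) R)
    (s : m) (p : m × m) (q : m × m × m) :
    (leg₂₃ K * M) (s, p) q = ∑ r, K p r * M (s, r) q := by
  simp [Matrix.mul_apply, leg₂₃_apply, Fintype.sum_prod_type]

theorem mul_leg₁₂_apply (K : Matrix (m × m) (m × m) R) (M : Matrix (m × m × m) (m × m × m) R)
    (p : m × m × m) (q : m × m) (s : m) :
    (M * leg₁₂ K) p (q.1, q.2, s) = ∑ r, K r q * M p (r.1, r.2, s) := by
  simp [Matrix.mul_apply, leg₁₂_apply, Fintype.sum_prod_type, mul_comm]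

/-- The composition of the flip with a two-leg operator `M`, as a matrix on the first (auxiliary)
leg with values in operators on the second (quantum) leg. For `M = Ř` this is the Lax matrix `L`. -/
def laxMatrix (M : Matrix (m × m) (m × m) R) : Matrix m m (Matrix m m R) :=
  of fun a c => of fun s s' => M (s, a) (c, s')

theorem laxMatrix_kronecker_apply (M M' : Matrix (m × m) (m × m) R) (p q : m × m) (s s' : m) :
    (laxMatrix M ⊗ₖ laxMatrix M') p q s s' = (leg₁₂ M * leg₂₃ M') (s, p) (q.1, q.2, s') := by
  simp [laxMatrix, Matrix.mul_apply, leg₁₂_apply, leg₂₃_apply, Fintype.sum_prod_type]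

theorem semiconjBy_laxMatrix_kronecker {K M M' : Matrix (m × m) (m × m) R}
    (h : leg₂₃ K * leg₁₂ M * leg₂₃ M' = leg₁₂ M' * leg₂₃ M * leg₁₂ K) :
    SemiconjBy ((algebraMap R (Matrix m m R)).mapMatrix K)
      (laxMatrix M ⊗ₖ laxMatrix M') (laxMatrix M' ⊗ₖ laxMatrix M) := by
  ext p q s s'
  simp only [algebraMap_mapMatrix_mul_apply, mul_algebraMap_mapMatrix_apply, Matrix.sum_apply,
    Matrix.smul_apply, smul_eq_mul, laxMatrix_kronecker_apply]
  rw [← leg₂₃_mul_apply, ← mul_assoc, h, mul_leg₁₂_apply]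

theorem semiconjBy_kronecker_mapMatrix {A B : Type*} [Semiring A] [Algebra R A] [Semiring B]
    [Algebra R B] (φ : A →ₐ[R] B) {K : Matrix (m × m) (m × m) R} {X Y : Matrix m m A}
    (h : SemiconjBy ((algebraMap R A).mapMatrix K) (X ⊗ₖ Y) (Y ⊗ₖ X)) :
    SemiconjBy ((algebraMap R B).mapMatrix K) (φ.mapMatrix X ⊗ₖ φ.mapMatrix Y)
      (φ.mapMatrix Y ⊗ₖ φ.mapMatrix X) := by
  have hkron (Z W : Matrix m m A) : φ.mapMatrix (Z ⊗ₖ W) = φ.mapMatrix Z ⊗ₖ φ.mapMatrix W := by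
    ext; simp
  have hscalar : φ.mapMatrix ((algebraMap R A).mapMatrix K) = (algebraMap R B).mapMatrix K := by
    ext; simp
  simpa only [hkron, hscalar] using h.map φ.mapMatrix

end Lax

section ZeroHecke

variable {R m : Type*} [CommRing R] [LinearOrder m]

/-- The `0`-Hecke operator `U` on `V ⊗ V`, for which `1 + (x ⊖ y) U` is the R-matrix up to the flip.
It maps `v_k ⊗ v_l` to `β v_k ⊗ v_l` if `k < l`, to `v_l ⊗ v_k` if `k > l`, and to `0` if
`k = l`. -/
def zeroHecke (β : R) : Matrix (m × m) (m × m) R :=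
  of fun p q => if q.1 < q.2 then (if p = q then β else 0)
    else if q.2 < q.1 then (if p = q.swap then 1 else 0) else 0

theorem commute_zeroHecke_diagonal [Fintype m] (β : R) {w : m × m → R}
    (hw : ∀ p, w p.swap = w p) : Commute (zeroHecke β) (diagonal w) := by
  ext p q
  rw [mul_diagonal, diagonal_mul, mul_comm]
  simp only [zeroHecke, of_apply]
  grind

variable [Fintype m]

theorem vecMul_zeroHecke (β : R) (f : m × m → R) (k l : m) :
    (f ᵥ* zeroHecke β) (k, l) =
      if k < l then β * f (k, l) else if l < k then f (l, k) else 0 := by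
  simp only [vecMul, dotProduct, zeroHecke, of_apply]
  split_ifs <;> simp [mul_comm]

theorem zeroHecke_mul_self (β : R) :
    zeroHecke β * zeroHecke β = β • (zeroHecke β : Matrix (m × m) (m × m) R) := by
  refine ext_iff_vecMul.2 fun f => funext fun ⟨k, l⟩ => ?_
  simp only [← vecMul_vecMul, vecMul_smul, Pi.smul_apply, smul_eq_mul, vecMul_zeroHecke]
  grind

theorem vecMul_leg₁₂_zeroHecke (β : R) (f : m × m × m → R) (a b c : m) :
    (f ᵥ* leg₁₂ (zeroHecke β)) (a, b, c) =
      if a < b then β * f (a, b, c) else if b < a then f (b, a, c) else 0 := by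
  rw [leg₁₂, vecMul_ampliation]
  exact vecMul_zeroHecke _ _ _ _

theorem vecMul_leg₂₃_zeroHecke (β : R) (f : m × m × m → R) (a b c : m) :
    (f ᵥ* leg₂₃ (zeroHecke β)) (a, b, c) =
      if b < c then β * f (a, b, c) else if c < b then f (a, c, b) else 0 := by
  rw [leg₂₃, vecMul_ampliation]
  exact vecMul_zeroHecke _ _ _ _

theorem braid_zeroHecke (β : R) :
    leg₁₂ (zeroHecke β) * leg₂₃ (zeroHecke β) * leg₁₂ (zeroHecke β) =
      leg₂₃ (zeroHecke β) * leg₁₂ (zeroHecke β) *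
        leg₂₃ (zeroHecke β : Matrix (m × m) (m × m) R) := by
  refine ext_iff_vecMul.2 fun f => funext fun ⟨a, b, c⟩ => ?_
  simp only [← vecMul_vecMul, vecMul_leg₁₂_zeroHecke, vecMul_leg₂₃_zeroHecke]
  grind

theorem yang_baxter_zeroHecke (β q r : R) :
    leg₂₃ (1 + q • zeroHecke β) * leg₁₂ (1 + (q + r + β * q * r) • zeroHecke β) *
        leg₂₃ (1 + r • zeroHecke β) =
      leg₁₂ (1 + r • zeroHecke β) * leg₂₃ (1 + (q + r + β * q * r) • zeroHecke β) *
        leg₁₂ (1 + q • (zeroHecke β : Matrix (m × m) (m × m) R)) := by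
  simp only [map_add, map_one, map_smul]
  refine yang_baxter_of_braid ?_ ?_ (braid_zeroHecke β) q r
  all_goals rw [← map_mul, zeroHecke_mul_self, map_smul]

end ZeroHecke

theorem one_add_mul_ne_zero_of_algebraicIndependent {R A ι : Type*} [CommRing R] [Nontrivial R]
    [CommRing A] [Algebra R A] {x : ι → A} (hx : AlgebraicIndependent R x) (i j : ι) :
    1 + x i * x j ≠ 0 := by
  intro h
  have hpoly : (1 + MvPolynomial.X i * MvPolynomial.X j : MvPolynomial ι R) = 0 :=
    hx.eq_zero_of_aeval_eq_zero _ (by simpa using h)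
  simpa using congrArg (MvPolynomial.eval 0) hpoly

section TransferMatrix

variable [Field F]

theorem om_eq_add_add_mul (β u : F) {v w : F} (hv : 1 + β * v ≠ 0) (hw : 1 + β * w ≠ 0) :
    om β u w = om β u v + om β v w + β * om β u v * om β v w := by
  have huw : om β u w * (1 + β * w) = u - w := div_mul_cancel₀ _ hw
  have huv : om β u v * (1 + β * v) = u - v := div_mul_cancel₀ _ hv
  have hvw : om β v w * (1 + β * w) = v - w := div_mul_cancel₀ _ hw
  apply mul_right_cancel₀ hw
  linear_combination huw - huv - (1 + β * om β u v) * hvw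

/-- `Ř(x, y)`, the composition of the flip with the R-matrix; see `laxMatrix_braidMatrix_apply`. -/
def braidMatrix (n : ℕ) (β x y : F) : Matrix (Fin n × Fin n) (Fin n × Fin n) F :=
  1 + om β x y • zeroHecke β

theorem laxMatrix_braidMatrix_apply (n : ℕ) (β x y : F) (a c s s' : Fin n) :
    laxMatrix (braidMatrix n β x y) a c s s' = Rmat n β x y (a, s) (c, s') := by
  simp only [laxMatrix, braidMatrix, zeroHecke, Rmat, of_apply, Matrix.add_apply,
    Matrix.smul_apply, Matrix.one_apply, Prod.mk.injEq, Prod.swap_prod_mk, smul_eq_mul]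
  grind

theorem isUnit_braidMatrix (n : ℕ) {β u v : F} (hu : 1 + β * u ≠ 0) (hv : 1 + β * v ≠ 0) :
    IsUnit (braidMatrix n β u v) := by
  have hself : om β u u = 0 := by simp [om]
  exact isUnit_one_add_smul (zeroHecke_mul_self β)
    ((om_eq_add_add_mul β u hv hu).symm.trans hself)

theorem commute_braidMatrix_diagonal_kronecker (n : ℕ) (β u v : F) (b : Fin n → F) :
    Commute (braidMatrix n β u v) (diagonal b ⊗ₖ diagonal b) := by
  rw [diagonal_kronecker_diagonal]
  exact (Commute.one_left _).add_left
    ((commute_zeroHecke_diagonal β fun _ => mul_comm _ _).smul_left _)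

theorem yang_baxter_braidMatrix (n : ℕ) (β u : F) {v w : F} (hv : 1 + β * v ≠ 0)
    (hw : 1 + β * w ≠ 0) :
    leg₂₃ (braidMatrix n β u v) * leg₁₂ (braidMatrix n β u w) * leg₂₃ (braidMatrix n β v w) =
      leg₁₂ (braidMatrix n β v w) * leg₂₃ (braidMatrix n β u w) * leg₁₂ (braidMatrix n β u v) := by
  simp only [braidMatrix, om_eq_add_add_mul β u hv hw]
  exact yang_baxter_zeroHecke β _ _

/-- The Lax matrix at site `i` of the chain, with entries in `End(H)`. -/
def siteLax (n N : ℕ) (β u : F) (t : Fin N → F) (i : Fin N) :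
    Matrix (Fin n) (Fin n) (Matrix (Fin N → Fin n) (Fin N → Fin n) F) :=
  (siteHom i).mapMatrix (laxMatrix (braidMatrix n β u (t i)))

/-- The monodromy matrix `T_a(u)` as a matrix on the auxiliary space with entries in `End(H)`. -/
def operatorMonodromy (n N : ℕ) (β u : F) (t : Fin N → F) :
    Matrix (Fin n) (Fin n) (Matrix (Fin N → Fin n) (Fin N → Fin n) F) :=
  (compRingEquiv (Fin n) (Fin N → Fin n) F).symm (Tmono n N β u t)

theorem compRingEquiv_symm_Rsite (n N : ℕ) (β u : F) (t : Fin N → F) (i : Fin N) :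
    (compRingEquiv (Fin n) (Fin N → Fin n) F).symm (Rsite n N β u (t i) i) =
      siteLax n N β u t i := by
  ext a c s s'
  rw [siteLax, AlgHom.mapMatrix_apply, map_apply, siteHom_apply, laxMatrix_braidMatrix_apply]
  change Rsite n N β u (t i) i (a, s) (c, s') = _
  simp only [Rsite, of_apply]
  congr

theorem operatorMonodromy_eq_prod (n N : ℕ) (β u : F) (t : Fin N → F) :
    operatorMonodromy n N β u t = ((List.finRange N).reverse.map (siteLax n N β u t)).prod := by
  rw [operatorMonodromy, Tmono, map_list_prod, List.ofFn_eq_map, ← List.map_reverse, List.map_map]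
  congr 2
  exact funext (compRingEquiv_symm_Rsite n N β u t)

theorem semiconjBy_operatorMonodromy_kronecker (n N : ℕ) (β u : F) {v : F} {t : Fin N → F}
    (hv : 1 + β * v ≠ 0) (ht : ∀ i, 1 + β * t i ≠ 0) :
    SemiconjBy ((algebraMap F _).mapMatrix (braidMatrix n β u v))
      (operatorMonodromy n N β u t ⊗ₖ operatorMonodromy n N β v t)
      (operatorMonodromy n N β v t ⊗ₖ operatorMonodromy n N β u t) := by
  simp only [operatorMonodromy_eq_prod]
  refine semiconjBy_kronecker_list_prod (fun i => ?_) (fun i j hij _ _ _ _ => ?_)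
    (List.nodup_reverse.2 (List.nodup_finRange N))
  · exact semiconjBy_kronecker_mapMatrix (siteHom i)
      (semiconjBy_laxMatrix_kronecker (yang_baxter_braidMatrix n β u hv (ht i)))
  · exact commute_siteHom hij _ _

theorem transferM_eq_trace (n N : ℕ) (β u : F) (t : Fin N → F) (b : Fin n → F) :
    transferM n N β u t b =
      trace ((algebraMap F _).mapMatrix (diagonal b) * operatorMonodromy n N β u t) := by
  ext s s'
  simp [transferM, trace, operatorMonodromy, Matrix.sum_apply, diagonal_map, diagonal_mul,
    ← Algebra.smul_def]

theorem transfer_commute_general (n N : ℕ) {β u v : F} {t : Fin N → F} (b : Fin n → F)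
    (hu : 1 + β * u ≠ 0) (hv : 1 + β * v ≠ 0) (ht : ∀ i, 1 + β * t i ≠ 0) :
    Commute (transferM n N β u t b) (transferM n N β v t b) := by
  simp only [transferM_eq_trace]
  exact commute_trace_mul_of_semiconjBy_kronecker (isUnit_braidMatrix n hu hv)
    (commute_braidMatrix_diagonal_kronecker n β u v b)
    (semiconjBy_operatorMonodromy_kronecker n N β u hv ht)

end TransferMatrix

/-- **Commutativity of transfer matrices**: `[t^{(n)}(u), t^{(n)}(v)] = 0`
for any diagonal twist `M_n = diag(b_0,…,b_{n-1})`. -/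
theorem transfer_commute [Field F] [CharZero F] (n N : ℕ) (hn : 2 ≤ n) (β u v : F)
    (t : Fin N → F) (b : Fin n → F)
    (hind : AlgebraicIndependent ℚ (Sum.elim ![β, u, v] t)) :
    transferM n N β u t b * transferM n N β v t b =
      transferM n N β v t b * transferM n N β u t b := by
  have hne := one_add_mul_ne_zero_of_algebraicIndependent hind (Sum.inl 0)
  exact transfer_commute_general n N b (hne (Sum.inl 1)) (hne (Sum.inl 2))
    fun i => hne (Sum.inr i)
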